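/- arXiv:2603.24884 — 2 statements merged into one kernel-verified Lean document; each statement's English description precedes it below -/
import Mathlib

section
/- For every integer n ≥ 2, the invariant subalgebra VG_n^{S_n} is isomorphic as a ℚ-algebra to ℚ[T]/⟨T^{n+1}⟩, the quotient of the univariate polynomial ring over ℚ by the ideal generated by T^{n+1}. -/
noncomputable section

/-- Index set for the variables `x_{ij}` with `i ≠ j` in `{1, …, n+1}` (as `Fin (n+1)`). -/
abbrev VGidx (n : ℕ) := {p : Fin (n+1) × Fin (n+1) // p.1 ≠ p.2}

/-- The defining ideal of the Varchenko–Gel'fand ring of the braid arrangement `A_n`. -/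
def VGrel (n : ℕ) : Ideal (MvPolynomial (VGidx n) ℚ) :=
  Ideal.span
    ({q | ∃ v : VGidx n, q = MvPolynomial.X v ^ 2} ∪
     {q | ∃ (i j : Fin (n+1)) (hij : i ≠ j),
        q = MvPolynomial.X (⟨(i,j),hij⟩ : VGidx n) + MvPolynomial.X ⟨(j,i),hij.symm⟩} ∪
     {q | ∃ (i j k : Fin (n+1)) (hij : i ≠ j) (hjk : j ≠ k) (hki : k ≠ i),
        q = MvPolynomial.X (⟨(i,j),hij⟩ : VGidx n) * MvPolynomial.X ⟨(j,k),hjk⟩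
          + MvPolynomial.X (⟨(j,k),hjk⟩ : VGidx n) * MvPolynomial.X ⟨(k,i),hki⟩
          + MvPolynomial.X (⟨(k,i),hki⟩ : VGidx n) * MvPolynomial.X ⟨(i,j),hij⟩})

/-- The Varchenko–Gel'fand ring `VG_n`. -/
abbrev VG (n : ℕ) := MvPolynomial (VGidx n) ℚ ⧸ VGrel n

/-- The action of a permutation of `{1, …, n+1}` on the variable indices. -/
def VGpermIdx (n : ℕ) (σ : Equiv.Perm (Fin (n+1))) : VGidx n → VGidx n :=
  fun v => ⟨(σ v.1.1, σ v.1.2), fun h => v.2 (σ.injective h)⟩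

lemma VGrel_stable (n : ℕ) (σ : Equiv.Perm (Fin (n+1))) :
    ∀ a ∈ VGrel n, (MvPolynomial.rename (VGpermIdx n σ)) a ∈ VGrel n := by
  intro a ha
  have hle : (VGrel n).map (MvPolynomial.rename (VGpermIdx n σ)).toRingHom ≤ VGrel n := by
    rw [VGrel, Ideal.map_span, Ideal.span_le]
    rintro q ⟨p, hp, rfl⟩
    apply Ideal.subset_span
    simp only [Set.mem_union, Set.mem_setOf_eq] at hp ⊢
    rcases hp with ((⟨v, rfl⟩ | ⟨i, j, hij, rfl⟩) | ⟨i, j, k, hij, hjk, hki, rfl⟩)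
    · refine Or.inl (Or.inl ⟨VGpermIdx n σ v, ?_⟩)
      simp [map_pow, MvPolynomial.rename_X]
    · refine Or.inl (Or.inr ⟨σ i, σ j, fun h => hij (σ.injective h), ?_⟩)
      simp [map_add, MvPolynomial.rename_X, VGpermIdx]
    · refine Or.inr ⟨σ i, σ j, σ k, fun h => hij (σ.injective h), fun h => hjk (σ.injective h),
        fun h => hki (σ.injective h), ?_⟩
      simp [map_add, map_mul, MvPolynomial.rename_X, VGpermIdx]
  exact hle (Ideal.mem_map_of_mem _ ha)

/-- The algebra automorphism of `VG_n` induced by a permutation of `{1, …, n+1}`. -/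
def VGperm (n : ℕ) (σ : Equiv.Perm (Fin (n+1))) : VG n →ₐ[ℚ] VG n :=
  Ideal.Quotient.liftₐ (VGrel n)
    ((Ideal.Quotient.mkₐ ℚ (VGrel n)).comp (MvPolynomial.rename (VGpermIdx n σ)))
    (fun a ha => by
      simp only [AlgHom.comp_apply, Ideal.Quotient.mkₐ_eq_mk]
      exact Ideal.Quotient.eq_zero_iff_mem.mpr (VGrel_stable n σ a ha))

/-- The subalgebra of `S_n`-invariants of `VG_n`, where `S_n` is the subgroup of permutations
of `{1, …, n+1}` fixing `n+1`. -/
def VGinv (n : ℕ) : Subalgebra ℚ (VG n) where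
  carrier := {x | ∀ σ : Equiv.Perm (Fin (n+1)), σ (Fin.last n) = Fin.last n → VGperm n σ x = x}
  mul_mem' := fun hx hy σ hσ => by rw [map_mul, hx σ hσ, hy σ hσ]
  add_mem' := fun hx hy σ hσ => by rw [map_add, hx σ hσ, hy σ hσ]
  one_mem' := fun σ _ => map_one _
  zero_mem' := fun σ _ => map_zero _
  algebraMap_mem' := fun r σ hσ => AlgHom.commutes _ r

/-- The subalgebra of `S_{n+1}`-invariants of `VG_n`. -/
def VGinvFull (n : ℕ) : Subalgebra ℚ (VG n) where
  carrier := {x | ∀ σ : Equiv.Perm (Fin (n+1)), VGperm n σ x = x}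
  mul_mem' := fun hx hy σ => by rw [map_mul, hx σ, hy σ]
  add_mem' := fun hx hy σ => by rw [map_add, hx σ, hy σ]
  one_mem' := fun σ => map_one _
  zero_mem' := fun σ => map_zero _
  algebraMap_mem' := fun r σ => AlgHom.commutes _ r

/-- The element `z = x_{1,n+1} + x_{2,n+1} + ⋯ + x_{n,n+1}` of `VG_n`. -/
def zVG (n : ℕ) : VG n :=
  Ideal.Quotient.mk (VGrel n)
    (∑ i : Fin n, MvPolynomial.X ⟨(i.castSucc, Fin.last n), (Fin.castSucc_lt_last i).ne⟩)

/-!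
Averaging over `S_n` kills every product of vertex-disjoint paths in which some path with at least
one edge misses the root `n + 1`. Indeed, Arnold's relation expands `x_{ab}` times a path starting
at `a` as the sum of all ways of inserting `b` into that path. Read with `x_{ba} = -x_{ab}`, this
says that a path `p` with `k ≥ 1` edges satisfies `p = -∑ σᵢ p` for `k` permutations `σᵢ` of its
vertices, so its average `t` satisfies `t = -k t` and vanishes. Leaf by leaf, the relations reduce every monomial to a product of
vertex-disjoint paths, one of which starts at the root; hence the invariants are spanned by the
averages of the root paths, one for each length `0, …, n`. Conversely `z` is a sum of `n`
square-zero elements, so `z ^ (n + 1) = 0`, while `z ^ n = n! ∏ x_{i,n+1}` is nonzero since it maps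
to `n! ∏ yᵢ` in `ℚ[y]/(yᵢ²)`. Thus `1, z, …, z ^ n` is a basis of the invariants.
-/

/-- Elements `x a b` of a commutative ring obeying the defining relations of the
Varchenko–Gel'fand ring, extended by `x a a = 0` to all pairs of indices. Allowing coincident
indices in Arnold's relation makes `(x a b) ^ 2 = 0` the case `i = k`. -/
structure IsArnoldFamily {V A : Type*} [CommRing A] (x : V → V → A) : Prop where
  self_eq_zero : ∀ a, x a a = 0
  swap : ∀ a b, x b a = -x a b
  arnold : ∀ i j k, x i j * x j k + x j k * x k i + x k i * x i j = 0

/-- The product `x a b₁ * x b₁ b₂ * ⋯` along the path that starts at `a` and visits `b₁, b₂, …`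
in turn. -/
def pathProd {V A : Type*} [CommRing A] (x : V → V → A) : V → List V → A
  | _, [] => 1
  | a, b :: l => x a b * pathProd x b l

/-- The subalgebra generated by the edges `x a b` with both endpoints in `S`. -/
def edgeSubalgebra (K : Type*) {V A : Type*} [CommRing K] [CommRing A] [Algebra K A]
    (x : V → V → A) (S : Set V) : Subalgebra K A :=
  Algebra.adjoin K (Set.image2 x S S)

section Edges

variable {K V A : Type*} [CommRing K] [CommRing A] [Algebra K A] {x : V → V → A} {S T : Set V}

lemma mem_edgeSubalgebra {a b : V} (ha : a ∈ S) (hb : b ∈ S) : x a b ∈ edgeSubalgebra K x S :=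
  Algebra.subset_adjoin (Set.mem_image2_of_mem ha hb)

lemma edgeSubalgebra_mono (h : S ⊆ T) : edgeSubalgebra K x S ≤ edgeSubalgebra K x T :=
  Algebra.adjoin_mono (Set.image2_subset h h)

lemma pathProd_mem_edgeSubalgebra {l : List V} :
    ∀ {a : V}, a ∈ S → (∀ b ∈ l, b ∈ S) → pathProd x a l ∈ edgeSubalgebra K x S := by
  induction l with
  | nil => exact fun _ _ => one_mem _
  | cons b l ih =>
    intro a ha hl
    obtain ⟨hb, hl⟩ := List.forall_mem_cons.mp hl
    exact mul_mem (mem_edgeSubalgebra ha hb) (ih hb hl)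

variable {φ : A →ₐ[K] A} {σ : V → V}

lemma map_pathProd (hφ : ∀ a b, φ (x a b) = x (σ a) (σ b)) (a : V) (l : List V) :
    φ (pathProd x a l) = pathProd x (σ a) (l.map σ) := by
  induction l generalizing a with
  | nil => exact map_one φ
  | cons b l ih => simp only [pathProd, List.map_cons, map_mul, hφ, ih]

lemma map_eq_self_of_mem_edgeSubalgebra (hφ : ∀ a b, φ (x a b) = x (σ a) (σ b))
    (hσ : ∀ a ∈ S, σ a = a) {y : A} (hy : y ∈ edgeSubalgebra K x S) : φ y = y := by
  have hle : edgeSubalgebra K x S ≤ AlgHom.equalizer φ (AlgHom.id K A) := by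
    refine Algebra.adjoin_le ?_
    rintro _ ⟨a, ha, b, hb, rfl⟩
    simp only [SetLike.mem_coe, AlgHom.mem_equalizer, hφ, hσ a ha, hσ b hb, AlgHom.id_apply]
  exact hle hy

end Edges

lemma exists_perm_map_eq_of_list_perm {V : Type*} {l l' : List V} (h : l.Perm l') (hl : l.Nodup) :
    ∃ σ : Equiv.Perm V, l.map σ = l' ∧ ∀ a ∉ l, σ a = a := by
  classical
  induction h with
  | nil => exact ⟨1, rfl, fun _ _ => rfl⟩
  | cons a _ ih =>
    obtain ⟨ha, hl⟩ := List.nodup_cons.mp hl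
    obtain ⟨σ, hσ, hfix⟩ := ih hl
    exact ⟨σ, by rw [List.map_cons, hσ, hfix a ha],
      fun b hb => hfix b fun h => hb (List.mem_cons_of_mem a h)⟩
  | swap a b l =>
    have hfix : ∀ c, c ≠ a → c ≠ b → Equiv.swap a b c = c :=
      fun _ => Equiv.swap_apply_of_ne_of_ne
    have hmap : l.map (Equiv.swap a b) = l := by
      refine (List.map_congr_left fun c hc => hfix c ?_ ?_).trans (List.map_id l) <;>
        rintro rfl <;> simp [hc] at hl
    refine ⟨Equiv.swap a b, by simp [hmap], fun c hc => ?_⟩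
    simp only [List.mem_cons, not_or] at hc
    exact hfix c hc.2.1 hc.1
  | trans h₁ _ ih₁ ih₂ =>
    obtain ⟨σ, hσ, hσfix⟩ := ih₁ hl
    obtain ⟨τ, hτ, hτfix⟩ := ih₂ (h₁.nodup_iff.mp hl)
    refine ⟨τ * σ, by rw [← hτ, ← hσ, List.map_map, Equiv.Perm.coe_mul], fun a ha => ?_⟩
    rw [Equiv.Perm.mul_apply, hσfix a ha, hτfix a fun h => ha (h₁.mem_iff.mpr h)]

namespace IsArnoldFamily

lemma of_pairwise_ne {V A : Type*} [CommRing A] {x : V → V → A} (hself : ∀ a, x a a = 0)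
    (hswap : ∀ a b, x b a = -x a b) (hsq : ∀ a b, x a b ^ 2 = 0)
    (harnold : ∀ i j k, i ≠ j → j ≠ k → k ≠ i →
      x i j * x j k + x j k * x k i + x k i * x i j = 0) : IsArnoldFamily x where
  self_eq_zero := hself
  swap := hswap
  arnold i j k := by
    by_cases hij : i = j
    · subst hij
      linear_combination -hsq i k + x i k * hswap i k + (x i k + x k i) * hself i
    by_cases hjk : j = k
    · subst hjk
      linear_combination -hsq i j + x i j * hswap i j + (x i j + x j i) * hself j
    by_cases hki : k = i
    · subst hki
      linear_combination -hsq k j + x k j * hswap k j + (x k j + x j k) * hself k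
    exact harnold i j k hij hjk hki

section Relations

variable {V A : Type*} [CommRing A] {x : V → V → A} (h : IsArnoldFamily x)
include h

lemma sq_eq_zero (a b : V) : x a b ^ 2 = 0 := by
  linear_combination -h.arnold a b a + x a b * h.swap a b + (x a b + x b a) * h.self_eq_zero a

lemma mul_eq_add (i j k : V) : x i j * x i k = x i j * x j k + x i k * x k j := by
  linear_combination -h.arnold i j k + (x i j + x j k) * h.swap i k - x i k * h.swap j k

lemma mul_eq_neg_sub (i k j : V) : x i j * x k j = -(x i j * x i k) - x k j * x k i := by
  linear_combination h.mul_eq_add j i k + (x i j + x k i) * h.swap k j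
    + (x i k - x j k) * h.swap i j

lemma mul_pathProd_eq_sum_insertIdx (i j : V) (l : List V) :
    x i j * pathProd x i l =
      ∑ k ∈ Finset.range (l.length + 1), pathProd x i (l.insertIdx k j) := by
  induction l generalizing i with
  | nil => simp [pathProd]
  | cons b l ih =>
    rw [List.length_cons, Finset.sum_range_succ']
    simp only [List.insertIdx_succ_cons, List.insertIdx_zero, pathProd, ← Finset.mul_sum, ← ih]
    linear_combination pathProd x b l * h.mul_eq_add i j b

end Relations

section Span

variable {K V A : Type*} [CommRing K] [CommRing A] [Algebra K A] {x : V → V → A}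
  (h : IsArnoldFamily x)
include h

lemma mul_pathProd_mem_span {r i : V} (j : V) {l : List V} (hi : i ∈ r :: l) :
    x i j * pathProd x r l ∈ Submodule.span K (pathProd x r '' {w | w.Perm (j :: l)}) := by
  induction l generalizing r with
  | nil =>
    obtain rfl := List.mem_singleton.mp hi
    exact Submodule.subset_span ⟨[j], List.Perm.refl _, rfl⟩
  | cons b l ih =>
    rcases List.mem_cons.mp hi with rfl | hi
    · rw [h.mul_pathProd_eq_sum_insertIdx]
      refine Submodule.sum_mem _ fun k hk => Submodule.subset_span ⟨_, ?_, rfl⟩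
      exact List.perm_insertIdx j _ (Finset.mem_range_succ_iff.mp hk)
    · have hle : Submodule.span K (pathProd x b '' {w | w.Perm (j :: l)}) ≤
          (Submodule.span K (pathProd x r '' {w | w.Perm (j :: b :: l)})).comap
            (LinearMap.mulLeft K (x r b)) := by
        rw [Submodule.span_le]
        rintro _ ⟨w, hw, rfl⟩
        exact Submodule.subset_span ⟨b :: w, (hw.cons b).trans (List.Perm.swap j b l), rfl⟩
      rw [pathProd, mul_left_comm]
      exact hle (ih hi)

/-- With `L` the span of `1` and the `x i j`, the relations give `L * L ≤ L * E` where `E` is the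
algebra of edges within `S`; hence `L * E` is already closed under multiplication. -/
lemma edgeSubalgebra_insert_le_mul (j : V) (S : Set V) :
    Subalgebra.toSubmodule (edgeSubalgebra K x (insert j S)) ≤
      Submodule.span K (insert 1 ((x · j) '' S)) *
        Subalgebra.toSubmodule (edgeSubalgebra K x S) := by
  set L := Submodule.span K (insert 1 ((x · j) '' S))
  set E := Subalgebra.toSubmodule (edgeSubalgebra K x S)
  have one_mem_L : (1 : A) ∈ L := Submodule.subset_span (Set.mem_insert _ _)
  have one_mem_E : (1 : A) ∈ E := one_mem (edgeSubalgebra K x S)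
  have leaf_mem_L {i : V} (hi : i ∈ S) : x i j ∈ L :=
    Submodule.subset_span (Set.mem_insert_of_mem _ ⟨i, hi, rfl⟩)
  have L_le : L ≤ L * E := fun y hy => mul_one y ▸ Submodule.mul_mem_mul hy one_mem_E
  have L_mul_L : L * L ≤ L * E := by
    rw [Submodule.span_mul_span, Submodule.span_le]
    rintro _ ⟨_, rfl | ⟨i, hi, rfl⟩, _, rfl | ⟨k, hk, rfl⟩, rfl⟩
    · exact L_le (by simpa only [mul_one] using one_mem_L)
    · exact L_le (by simpa only [one_mul] using leaf_mem_L hk)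
    · exact L_le (by simpa only [mul_one] using leaf_mem_L hi)
    · simp only [h.mul_eq_neg_sub i k j]
      exact sub_mem (neg_mem (Submodule.mul_mem_mul (leaf_mem_L hi) (mem_edgeSubalgebra hi hk)))
        (Submodule.mul_mem_mul (leaf_mem_L hk) (mem_edgeSubalgebra hk hi))
  have E_mul_E : E * E = E := Subalgebra.isIdempotentElem_toSubmodule _
  have mul_closed : ∀ y z, y ∈ L * E → z ∈ L * E → y * z ∈ L * E := by
    intro y z hy hz
    have hle : (L * E) * (L * E) ≤ L * E := by
      calc (L * E) * (L * E) = L * L * E := by rw [mul_mul_mul_comm, E_mul_E]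
        _ ≤ L * E * E := mul_le_mul' L_mul_L le_rfl
        _ = L * E := by rw [mul_assoc, E_mul_E]
    exact hle (Submodule.mul_mem_mul hy hz)
  suffices edgeSubalgebra K x (insert j S) ≤
      (L * E).toSubalgebra (L_le one_mem_L) mul_closed from this
  refine Algebra.adjoin_le ?_
  rintro _ ⟨a, rfl | ha, b, rfl | hb, rfl⟩
  · rw [h.self_eq_zero]
    exact zero_mem _
  · rw [h.swap b]
    exact neg_mem (L_le (leaf_mem_L hb))
  · exact L_le (leaf_mem_L ha)
  · exact one_mul (x a b) ▸ Submodule.mul_mem_mul one_mem_L (mem_edgeSubalgebra ha hb)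

lemma mem_of_mem_edgeSubalgebra_insert {N : Submodule K A} {j : V} {S : Set V}
    (hN : ∀ y ∈ edgeSubalgebra K x S, y ∈ N)
    (hN_leaf : ∀ i ∈ S, ∀ y ∈ edgeSubalgebra K x S, x i j * y ∈ N) :
    ∀ y ∈ edgeSubalgebra K x (insert j S), y ∈ N := by
  suffices Submodule.span K (insert 1 ((x · j) '' S)) *
      Subalgebra.toSubmodule (edgeSubalgebra K x S) ≤ N from
    fun y hy => this (h.edgeSubalgebra_insert_le_mul j S hy)
  refine Submodule.mul_le.mpr fun u hu y hy => ?_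
  suffices Submodule.span K (insert 1 ((x · j) '' S)) ≤ N.comap (LinearMap.mulRight K y) from
    this hu
  rw [Submodule.span_le]
  rintro _ (rfl | ⟨i, hi, rfl⟩)
  · simpa using hN y hy
  · exact hN_leaf i hi y hy

/-- Every product of edges is a combination of products of a path leaving the root `r` and edges
avoiding that path. -/
lemma mem_of_mem_edgeSubalgebra_insert_root {r : V} {U : Set V} (hU : U.Finite) {N : Submodule K A}
    (hN : ∀ l : List V, l.Nodup → (∀ a ∈ l, a ∈ U) →
      ∀ m ∈ edgeSubalgebra K x (U \ {a | a ∈ l}), pathProd x r l * m ∈ N) :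
    ∀ y ∈ edgeSubalgebra K x (insert r U), y ∈ N := by
  induction U, hU using Set.Finite.induction_on generalizing N with
  | empty =>
    refine h.mem_of_mem_edgeSubalgebra_insert (fun y hy => ?_) (by simp)
    simpa [pathProd] using hN [] List.nodup_nil (by simp) y (by simpa using hy)
  | @insert j U hj _ ih =>
    have hsub (l : List V) (hl : ∀ a ∈ l, a ∈ U) :
        insert j (U \ {a | a ∈ l}) = insert j U \ {a | a ∈ l} :=
      (Set.insert_sdiff_of_notMem U fun h => hj (hl j h)).symm
    rw [Set.insert_comm]
    refine h.mem_of_mem_edgeSubalgebra_insert (ih fun l hl hlU m hm => ?_) fun i hi => ?_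
    · refine hN l hl (fun a ha => Set.mem_insert_of_mem j (hlU a ha)) m ?_
      exact edgeSubalgebra_mono (Set.sdiff_subset_sdiff_left (Set.subset_insert j U)) hm
    · refine ih (N := N.comap (LinearMap.mulLeft K (x i j))) fun l hl hlU m hm => ?_
      rw [Submodule.mem_comap, LinearMap.mulLeft_apply]
      by_cases hil : i ∈ r :: l
      · have hle : Submodule.span K (pathProd x r '' {w | w.Perm (j :: l)}) ≤
            N.comap (LinearMap.mulRight K m) := by
          rw [Submodule.span_le]
          rintro _ ⟨w, hw, rfl⟩
          refine hN w (hw.nodup_iff.mpr (List.nodup_cons.mpr ⟨fun h => hj (hlU j h), hl⟩))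
            (fun a ha => ?_) m (edgeSubalgebra_mono ?_ hm)
          · exact (List.mem_cons.mp (hw.mem_iff.mp ha)).imp_right (hlU a)
          · rintro a ⟨haU, hal⟩
            refine ⟨Set.mem_insert_of_mem j haU, fun haw => ?_⟩
            rcases List.mem_cons.mp (hw.mem_iff.mp haw) with rfl | h
            exacts [hj haU, hal h]
        rw [← mul_assoc]
        exact hle (h.mul_pathProd_mem_span j hil)
      · obtain ⟨hir, hil⟩ := not_or.mp (mt List.mem_cons.mpr hil)
        rw [mul_left_comm]
        refine hN l hl (fun a ha => Set.mem_insert_of_mem j (hlU a ha)) _ ?_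
        rw [← hsub l hlU]
        exact mul_mem (mem_edgeSubalgebra (Set.mem_insert_of_mem j ⟨hi.resolve_left hir, hil⟩)
          (Set.mem_insert j _)) (edgeSubalgebra_mono (Set.subset_insert _ _) hm)

end Span

section Average

variable {K V A M : Type*} [CommRing K] [CommRing A] [Algebra K A] [AddCommGroup M] [Module K M]
  {x : V → V → A} {φ : Equiv.Perm V → A →ₐ[K] A} {R : A →ₗ[K] M} {r : V}

/-- Inserting `b` into the path through `a :: l` writes the path from `b` as *minus* the sum of
`l.length + 1` paths from `a`, each of which is a permuted copy of it. -/
lemma map_pathProd_cons_mul_eq_zero [IsAddTorsionFree M] (h : IsArnoldFamily x)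
    (hφ : ∀ σ a b, φ σ (x a b) = x (σ a) (σ b)) (hR : ∀ σ, σ r = r → ∀ y, R (φ σ y) = R y)
    {a b : V} {l : List V} (hl : (b :: a :: l).Nodup) (hr : r ∉ b :: a :: l) {q : A}
    (hq : q ∈ edgeSubalgebra K x {c | c ∉ b :: a :: l}) :
    R (pathProd x b (a :: l) * q) = 0 := by
  set t := R (pathProd x b (a :: l) * q)
  have hinsert : pathProd x b (a :: l) =
      -∑ k ∈ Finset.range (l.length + 1), pathProd x a (l.insertIdx k b) := by
    rw [← h.mul_pathProd_eq_sum_insertIdx, pathProd, h.swap a b, neg_mul]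
  have hperm (k : ℕ) (hk : k ∈ Finset.range (l.length + 1)) :
      R (pathProd x a (l.insertIdx k b) * q) = t := by
    have hw : (b :: a :: l).Perm (a :: l.insertIdx k b) :=
      (List.Perm.swap a b l).trans
        ((List.perm_insertIdx b l (Finset.mem_range_succ_iff.mp hk)).symm.cons a)
    obtain ⟨σ, hσ, hfix⟩ := exists_perm_map_eq_of_list_perm hw hl
    rw [List.map_cons, List.cons.injEq] at hσ
    calc R (pathProd x a (l.insertIdx k b) * q) = R (φ σ (pathProd x b (a :: l) * q)) := by
          rw [map_mul (φ σ), map_pathProd (hφ σ), hσ.1, hσ.2,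
            map_eq_self_of_mem_edgeSubalgebra (hφ σ) hfix hq]
      _ = t := hR σ (hfix r hr) _
  have ht : t = -((l.length + 1) • t) := by
    calc t = -∑ k ∈ Finset.range (l.length + 1), R (pathProd x a (l.insertIdx k b) * q) := by
          rw [← map_sum, ← map_neg, ← Finset.sum_mul, ← neg_mul, ← hinsert]
      _ = -((l.length + 1) • t) := by
          rw [Finset.sum_congr rfl hperm, Finset.sum_const, Finset.card_range]
  have hsmul : (l.length + 1 + 1) • t = 0 := by
    rw [succ_nsmul, ← eq_neg_iff_add_eq_zero, ← neg_eq_iff_eq_neg]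
    exact ht.symm
  exact (nsmul_eq_zero_iff_right (Nat.succ_ne_zero _)).mp hsmul

lemma map_mul_mem_span_of_mem_compl [IsAddTorsionFree M] (h : IsArnoldFamily x)
    (hφ : ∀ σ a b, φ σ (x a b) = x (σ a) (σ b)) (hR : ∀ σ, σ r = r → ∀ y, R (φ σ y) = R y)
    {W : Set V} (hW : W.Finite) (hrW : r ∉ W) {p : A} (hp : p ∈ edgeSubalgebra K x Wᶜ) :
    ∀ m ∈ edgeSubalgebra K x W, R (p * m) ∈ Submodule.span K {R p} := by
  induction W, hW using Set.Finite.induction_on with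
  | empty =>
    intro m hm
    obtain ⟨c, rfl⟩ : ∃ c, algebraMap K A c = m := by
      simpa [edgeSubalgebra, Algebra.mem_bot] using hm
    rw [mul_comm, ← Algebra.smul_def, map_smul]
    exact Submodule.smul_mem _ c (Submodule.mem_span_singleton_self _)
  | @insert b W hb hW ih =>
    refine h.mem_of_mem_edgeSubalgebra_insert_root hW
      (N := (Submodule.span K {R p}).comap (R ∘ₗ LinearMap.mulLeft K p)) fun l hl hlW m hm => ?_
    simp only [Submodule.mem_comap, LinearMap.comp_apply, LinearMap.mulLeft_apply]
    rcases l with _ | ⟨a, l⟩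
    · rw [pathProd, one_mul]
      exact ih (fun hr => hrW (Set.mem_insert_of_mem b hr))
        (edgeSubalgebra_mono (Set.compl_subset_compl.mpr (Set.subset_insert b W)) hp) m
        (by simpa using hm)
    · have hblW : ∀ c ∈ b :: a :: l, c ∈ insert b W :=
        fun c hc => (List.mem_cons.mp hc).imp_right (hlW c)
      have hpm : p * m ∈ edgeSubalgebra K x {c | c ∉ b :: a :: l} := by
        have hsub : (insert b W)ᶜ ⊆ {c | c ∉ b :: a :: l} := fun c hc hcl => hc (hblW c hcl)
        refine mul_mem (edgeSubalgebra_mono hsub hp) (edgeSubalgebra_mono ?_ hm)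
        rintro c ⟨hcW, hcl⟩ hc
        rcases List.mem_cons.mp hc with rfl | hc
        exacts [hb hcW, hcl hc]
      rw [mul_left_comm, h.map_pathProd_cons_mul_eq_zero hφ hR
        (List.nodup_cons.mpr ⟨fun hbl => hb (hlW b hbl), hl⟩) (fun hr => hrW (hblW r hr)) hpm]
      exact zero_mem _

lemma map_mem_span_pathProd [IsAddTorsionFree M] [Finite V] (h : IsArnoldFamily x)
    (hφ : ∀ σ a b, φ σ (x a b) = x (σ a) (σ b)) (hR : ∀ σ, σ r = r → ∀ y, R (φ σ y) = R y)
    {y : A} (hy : y ∈ edgeSubalgebra K x Set.univ) :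
    R y ∈ Submodule.span K ((fun l => R (pathProd x r l)) '' {l | (r :: l).Nodup}) := by
  have huniv : insert r {r}ᶜ = (Set.univ : Set V) := by
    rw [← Set.singleton_union, Set.union_compl_self]
  refine h.mem_of_mem_edgeSubalgebra_insert_root (U := {r}ᶜ) (Set.toFinite _)
    (N := (Submodule.span K _).comap R) (fun l hl hlr m hm => ?_) y (huniv ▸ hy)
  have hrl : r ∉ l := fun hr => hlr r hr rfl
  have hp : pathProd x r l ∈ edgeSubalgebra K x ({r}ᶜ \ {a | a ∈ l})ᶜ :=
    pathProd_mem_edgeSubalgebra (fun hr => hr.1 rfl) fun b hb hbl => hbl.2 hb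
  refine Submodule.span_mono ?_ (h.map_mul_mem_span_of_mem_compl hφ hR (Set.toFinite _)
    (fun hr => hr.1 rfl) hp m hm)
  rw [Set.singleton_subset_iff]
  exact ⟨l, List.nodup_cons.mpr ⟨hrl, hl⟩, rfl⟩

lemma map_pathProd_eq_map_pathProd_take (hφ : ∀ σ a b, φ σ (x a b) = x (σ a) (σ b))
    (hR : ∀ σ, σ r = r → ∀ y, R (φ σ y) = R y) {e l : List V} (he : ∀ a, a ≠ r → a ∈ e)
    (hre : (r :: e).Nodup) (hrl : (r :: l).Nodup) :
    R (pathProd x r l) = R (pathProd x r (e.take l.length)) := by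
  rw [List.nodup_cons] at hre hrl
  obtain ⟨l', hl', hsub⟩ : l.Subperm e :=
    List.subperm_of_subset hrl.2 fun a ha => he a fun har => hrl.1 (har ▸ ha)
  obtain ⟨m, hm⟩ := hsub.exists_perm_append
  have hperm : e.Perm (l ++ m) := hm.trans (hl'.append_right m)
  obtain ⟨σ, hσ, hfix⟩ := exists_perm_map_eq_of_list_perm hperm.symm (hperm.nodup_iff.mp hre.2)
  have hσr : σ r = r := hfix r fun hr => hre.1 (hperm.mem_iff.mpr hr)
  have hσl : l.map σ = e.take l.length := by
    rw [← hσ, List.map_append, List.take_left' (List.length_map _)]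
  rw [← hR σ hσr, map_pathProd (hφ σ), hσr, hσl]

lemma rank_range_le_card [Nontrivial K] [IsAddTorsionFree M] [Finite V] (h : IsArnoldFamily x)
    (htop : edgeSubalgebra K x Set.univ = ⊤) (hφ : ∀ σ a b, φ σ (x a b) = x (σ a) (σ b))
    (hR : ∀ σ, σ r = r → ∀ y, R (φ σ y) = R y) :
    Module.rank K (LinearMap.range R) ≤ Nat.card V := by
  classical
  have := Fintype.ofFinite V
  set e := (Finset.univ.erase r).toList
  have he (a : V) (ha : a ≠ r) : a ∈ e := by simp [e, ha]
  have hre : (r :: e).Nodup := List.nodup_cons.mpr ⟨by simp [e], Finset.nodup_toList _⟩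
  set f : Fin (Fintype.card V) → M := fun k => R (pathProd x r (e.take k))
  have hle : LinearMap.range R ≤ Submodule.span K (Set.range f) := by
    rintro _ ⟨y, rfl⟩
    refine Submodule.span_mono ?_ (h.map_mem_span_pathProd hφ hR (htop ▸ Algebra.mem_top))
    rintro _ ⟨l, hl, rfl⟩
    exact ⟨⟨l.length, hl.length_le_card⟩,
      (map_pathProd_eq_map_pathProd_take hφ hR he hre hl).symm⟩
  calc Module.rank K (LinearMap.range R) ≤ Module.rank K (Submodule.span K (Set.range f)) :=
        Submodule.rank_mono hle
    _ ≤ Cardinal.mk (Set.range f) := rank_span_le _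
    _ ≤ Nat.card V := by simpa using Cardinal.mk_range_le_lift (f := f)

end Average

lemma rank_le_card_of_forall_perm {K V A : Type*} [Field K] [CharZero K] [CommRing A] [Algebra K A]
    [Finite V] {x : V → V → A} (h : IsArnoldFamily x) (htop : edgeSubalgebra K x Set.univ = ⊤)
    {φ : Equiv.Perm V →* (A →ₐ[K] A)} (hφ : ∀ σ a b, φ σ (x a b) = x (σ a) (σ b)) (r : V)
    {N : Submodule K A} (hN : ∀ y ∈ N, ∀ σ : Equiv.Perm V, σ r = r → φ σ y = y) :
    Module.rank K N ≤ Nat.card V := by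
  classical
  have := Fintype.ofFinite V
  have : IsAddTorsionFree A := .of_isTorsionFree K A
  let ρ : Representation K (MulAction.stabilizer (Equiv.Perm V) r) A :=
    (AlgHom.toEnd.comp φ).comp (Subgroup.subtype _)
  have : Invertible (Fintype.card (MulAction.stabilizer (Equiv.Perm V) r) : K) :=
    invertibleOfNonzero (Nat.cast_ne_zero.mpr Fintype.card_ne_zero)
  have hR (σ : Equiv.Perm V) (hσ : σ r = r) (y : A) : ρ.averageMap (φ σ y) = ρ.averageMap y := by
    have hρ : φ σ y = ρ ⟨σ, hσ⟩ y := rfl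
    rw [hρ, Representation.averageMap, ← ρ.asAlgebraHom_single_one, ← Module.End.mul_apply,
      ← map_mul, GroupAlgebra.mul_average_right]
  have hle : N ≤ LinearMap.range ρ.averageMap := by
    rw [ρ.isProj_averageMap.range]
    exact fun y hy σ => hN y hy σ σ.2
  exact (Submodule.rank_mono hle).trans (h.rank_range_le_card htop hφ hR)

end IsArnoldFamily

section SquareZero

variable {ι A : Type*} [CommRing A] {y : ι → A}

lemma sum_pow_card_of_sq_eq_zero (hy : ∀ i, y i ^ 2 = 0) (s : Finset ι) :
    (∑ i ∈ s, y i) ^ s.card = s.card.factorial * ∏ i ∈ s, y i ∧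
      (∑ i ∈ s, y i) ^ (s.card + 1) = 0 := by
  classical
  induction s using Finset.induction_on with
  | empty => simp
  | insert a s ha ih =>
    have hpow (k : ℕ) : (∑ i ∈ s, y i + y a) ^ (k + 1) =
        (∑ i ∈ s, y i) ^ (k + 1) + (k + 1) * (∑ i ∈ s, y i) ^ k * y a := by
      simpa using (Polynomial.X ^ (k + 1) : Polynomial ℤ).aeval_add_of_sq_eq_zero
        (∑ i ∈ s, y i) (y a) (hy a)
    rw [Finset.sum_insert ha, Finset.prod_insert ha, Finset.card_insert_of_notMem ha,
      add_comm (y a), hpow, hpow, pow_succ _ (s.card + 1), ih.2, ih.1, Nat.factorial_succ]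
    push_cast
    constructor <;> ring

lemma isArnoldFamily_of_sq_eq_zero [LinearOrder ι] (hy : ∀ i, y i ^ 2 = 0) :
    IsArnoldFamily fun a b => if a < b then y a else if b < a then -y b else 0 := by
  refine IsArnoldFamily.of_pairwise_ne (fun a => by simp) (fun a b => ?_) (fun a b => ?_)
    fun i j k hij hjk hki => ?_
  · rcases lt_trichotomy a b with hab | rfl | hab
    · simp [hab, hab.not_gt]
    · simp
    · simp [hab, hab.not_gt]
  · split_ifs <;> simp [hy]
  · rcases hij.lt_or_gt with hij | hij <;> rcases hjk.lt_or_gt with hjk | hjk <;>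
      rcases hki.lt_or_gt with hki | hki <;>
      simp only [hij, hij.not_gt, hjk, hjk.not_gt, hki, hki.not_gt, if_true, if_false] <;>
      first
      | exact absurd (hij.trans hjk) hki.not_gt
      | exact absurd (hjk.trans hij) hki.not_gt
      | linear_combination -hy i
      | linear_combination -hy j
      | linear_combination -hy k

end SquareZero

lemma prod_X_notMem_span_X_sq {ι R : Type*} [Fintype ι] [CommRing R] [Nontrivial R] :
    ∏ i, (MvPolynomial.X i : MvPolynomial ι R) ∉
      Ideal.span (Set.range fun i => (MvPolynomial.X i : MvPolynomial ι R) ^ 2) := by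
  classical
  set u : ι →₀ ℕ := ∑ i, Finsupp.single i 1
  have hprod : ∏ i, (MvPolynomial.X i : MvPolynomial ι R) = MvPolynomial.monomial u 1 :=
    (MvPolynomial.monomial_sum_one _ _).symm
  have hsq : Set.range (fun i => (MvPolynomial.X i : MvPolynomial ι R) ^ 2) =
      (fun s => MvPolynomial.monomial s 1) '' Set.range fun i => Finsupp.single i 2 := by
    rw [← Set.range_comp]
    simp only [MvPolynomial.X_pow_eq_monomial, Function.comp_def]
  rw [hsq, MvPolynomial.mem_ideal_span_monomial_image, hprod]
  intro hmem
  obtain ⟨_, ⟨i, rfl⟩, hi⟩ := hmem u (by simp)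
  have := hi i
  simp [u, Finsupp.single_apply] at this

open Polynomial in
lemma nonempty_algEquiv_quotient_span_X_pow {K B : Type*} [Field K] [CommRing B] [Algebra K B]
    {z : B} {m : ℕ} (hz : z ^ m ≠ 0) (hz' : z ^ (m + 1) = 0) (hrank : Module.rank K B ≤ m + 1) :
    Nonempty (B ≃ₐ[K] K[X] ⧸ Ideal.span {(X : K[X]) ^ (m + 1)}) := by
  have hfin : Module.Finite K B :=
    Module.rank_lt_aleph0_iff.mp (hrank.trans_lt (by exact_mod_cast Cardinal.natCast_lt_aleph0))
  have hmin : minpoly K z = X ^ (m + 1) := by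
    obtain ⟨k, hk, hassoc⟩ := (dvd_prime_pow Polynomial.prime_X (m + 1)).mp
      (minpoly.dvd K z (p := X ^ (m + 1)) (by rw [map_pow, aeval_X, hz']))
    have heq : minpoly K z = X ^ k :=
      eq_of_monic_of_associated (minpoly.monic (.of_finite K z)) (monic_X_pow k) hassoc
    have hzk : z ^ k = 0 := by simpa [heq] using minpoly.aeval K z
    rw [heq, le_antisymm hk (not_le.mp fun hkm => hz (pow_eq_zero_of_le hkm hzk))]
  have hli := linearIndependent_pow (K := K) z
  rw [hmin, natDegree_X_pow] at hli
  have hspan : Submodule.span K (Set.range fun i : Fin (m + 1) => z ^ (i : ℕ)) = ⊤ := by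
    refine hli.span_eq_top_of_card_eq_finrank' (le_antisymm hli.fintype_card_le_finrank ?_)
    rw [Fintype.card_fin]
    exact Module.finrank_le_of_rank_le (by exact_mod_cast hrank)
  have hrange : LinearMap.range (aeval z : K[X] →ₐ[K] B).toLinearMap = ⊤ := by
    rw [eq_top_iff, ← hspan, Submodule.span_le]
    rintro _ ⟨i, rfl⟩
    exact ⟨X ^ (i : ℕ), by simp⟩
  have hsurj : Function.Surjective (aeval z : K[X] →ₐ[K] B) := LinearMap.range_eq_top.mp hrange
  have hker : RingHom.ker (aeval z : K[X] →ₐ[K] B) = Ideal.span {X ^ (m + 1)} := by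
    rw [← hmin]
    exact minpoly.ker_aeval_eq_span_minpoly K z
  rw [← hker]
  exact ⟨(Ideal.quotientKerAlgEquivOfSurjective hsurj).symm⟩

section VG

variable {n : ℕ}

/-- The image of `x_{ij}` in `VG n`, extended by `0` to the diagonal. -/
def VGgen (n : ℕ) (i j : Fin (n + 1)) : VG n :=
  if h : i ≠ j then Ideal.Quotient.mk (VGrel n) (MvPolynomial.X ⟨(i, j), h⟩) else 0

lemma VGgen_of_ne {i j : Fin (n + 1)} (h : i ≠ j) :
    VGgen n i j = Ideal.Quotient.mk (VGrel n) (MvPolynomial.X ⟨(i, j), h⟩) :=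
  dif_pos h

lemma VGgen_self (i : Fin (n + 1)) : VGgen n i i = 0 :=
  dif_neg (not_not_intro rfl)

lemma isArnoldFamily_VGgen : IsArnoldFamily (VGgen n) := by
  refine IsArnoldFamily.of_pairwise_ne VGgen_self (fun i j => ?_) (fun i j => ?_)
    fun i j k hij hjk hki => ?_
  · rcases eq_or_ne i j with rfl | h
    · rw [VGgen_self, neg_zero]
    · rw [VGgen_of_ne h, VGgen_of_ne h.symm, eq_neg_iff_add_eq_zero, add_comm, ← map_add]
      exact Ideal.Quotient.eq_zero_iff_mem.mpr
        (Ideal.subset_span (Or.inl (Or.inr ⟨i, j, h, rfl⟩)))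
  · rcases eq_or_ne i j with rfl | h
    · rw [VGgen_self, zero_pow two_ne_zero]
    · rw [VGgen_of_ne h, ← map_pow]
      exact Ideal.Quotient.eq_zero_iff_mem.mpr (Ideal.subset_span (Or.inl (Or.inl ⟨_, rfl⟩)))
  · rw [VGgen_of_ne hij, VGgen_of_ne hjk, VGgen_of_ne hki]
    simp only [← map_mul, ← map_add]
    exact Ideal.Quotient.eq_zero_iff_mem.mpr
      (Ideal.subset_span (Or.inr ⟨i, j, k, hij, hjk, hki, rfl⟩))

lemma edgeSubalgebra_VGgen_univ : edgeSubalgebra ℚ (VGgen n) Set.univ = ⊤ := by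
  have hX : (Ideal.Quotient.mkₐ ℚ (VGrel n)).range ≤ edgeSubalgebra ℚ (VGgen n) Set.univ := by
    rw [← Algebra.map_top, ← MvPolynomial.adjoin_range_X, AlgHom.map_adjoin]
    refine Algebra.adjoin_le ?_
    rintro _ ⟨_, ⟨⟨⟨i, j⟩, h⟩, rfl⟩, rfl⟩
    exact VGgen_of_ne h ▸ mem_edgeSubalgebra (Set.mem_univ i) (Set.mem_univ j)
  exact top_le_iff.mp fun y _ => hX (Ideal.Quotient.mkₐ_surjective ℚ (VGrel n) y)

lemma VG_algHom_ext {A : Type*} [Semiring A] [Algebra ℚ A] {f g : VG n →ₐ[ℚ] A}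
    (hfg : ∀ i j, f (VGgen n i j) = g (VGgen n i j)) : f = g := by
  refine Ideal.Quotient.algHom_ext ℚ (MvPolynomial.algHom_ext ?_)
  rintro ⟨⟨i, j⟩, h⟩
  have hij := hfg i j
  rw [VGgen_of_ne h] at hij
  exact hij

/-- The universal property of `VG n`: it carries the universal Arnold family of `ℚ`-algebras. -/
def VGlift {A : Type*} [CommRing A] [Algebra ℚ A] {x : Fin (n + 1) → Fin (n + 1) → A}
    (h : IsArnoldFamily x) : VG n →ₐ[ℚ] A :=
  Ideal.Quotient.liftₐ (VGrel n) (MvPolynomial.aeval fun v => x v.1.1 v.1.2) fun q hq => by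
    suffices VGrel n ≤ RingHom.ker (MvPolynomial.aeval fun v : VGidx n => x v.1.1 v.1.2) from
      this hq
    refine Ideal.span_le.mpr ?_
    rintro q ((⟨v, rfl⟩ | ⟨i, j, _, rfl⟩) | ⟨i, j, k, _, _, _, rfl⟩) <;>
      simp only [SetLike.mem_coe, RingHom.mem_ker, map_pow, map_add, map_mul, MvPolynomial.aeval_X]
    · exact h.sq_eq_zero _ _
    · rw [h.swap i j, add_neg_cancel]
    · exact h.arnold i j k

lemma VGlift_VGgen {A : Type*} [CommRing A] [Algebra ℚ A] {x : Fin (n + 1) → Fin (n + 1) → A}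
    (h : IsArnoldFamily x) (i j : Fin (n + 1)) : VGlift h (VGgen n i j) = x i j := by
  rcases eq_or_ne i j with rfl | hij
  · rw [VGgen_self, map_zero, h.self_eq_zero]
  · rw [VGgen_of_ne hij]
    exact MvPolynomial.aeval_X _ _

lemma VGperm_VGgen (σ : Equiv.Perm (Fin (n + 1))) (i j : Fin (n + 1)) :
    VGperm n σ (VGgen n i j) = VGgen n (σ i) (σ j) := by
  rcases eq_or_ne i j with rfl | hij
  · rw [VGgen_self, VGgen_self, map_zero]
  · rw [VGgen_of_ne hij, VGgen_of_ne (σ.injective.ne hij)]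
    exact congrArg (Ideal.Quotient.mk (VGrel n)) (MvPolynomial.rename_X _ _)

/-- The action of `S_{n+1}` on `VG n` as a monoid homomorphism. -/
def VGpermHom (n : ℕ) : Equiv.Perm (Fin (n + 1)) →* (VG n →ₐ[ℚ] VG n) where
  toFun := VGperm n
  map_one' := VG_algHom_ext fun i j => VGperm_VGgen 1 i j
  map_mul' σ τ := VG_algHom_ext fun i j => by
    simp only [AlgHom.mul_apply, VGperm_VGgen, Equiv.Perm.mul_apply]

lemma rank_VGinv_le (n : ℕ) : Module.rank ℚ (VGinv n) ≤ n + 1 := by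
  have hle := isArnoldFamily_VGgen.rank_le_card_of_forall_perm edgeSubalgebra_VGgen_univ
    (φ := VGpermHom n) VGperm_VGgen (Fin.last n) (N := Subalgebra.toSubmodule (VGinv n))
    fun _ hy => hy
  rw [Nat.card_fin, Nat.cast_add_one] at hle
  exact hle

lemma zVG_eq_sum_VGgen (n : ℕ) : zVG n = ∑ i : Fin n, VGgen n i.castSucc (Fin.last n) := by
  rw [zVG, map_sum]
  exact Finset.sum_congr rfl fun i _ => (VGgen_of_ne (Fin.castSucc_lt_last i).ne).symm

lemma zVG_eq_sum_univ (n : ℕ) : zVG n = ∑ i, VGgen n i (Fin.last n) := by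
  rw [Fin.sum_univ_castSucc, VGgen_self, add_zero, zVG_eq_sum_VGgen]

lemma zVG_mem_VGinv (n : ℕ) : zVG n ∈ VGinv n := by
  intro σ hσ
  simp only [zVG_eq_sum_univ, map_sum, VGperm_VGgen, hσ]
  exact Equiv.sum_comp σ fun i => VGgen n i (Fin.last n)

lemma zVG_pow_succ_eq_zero (n : ℕ) : zVG n ^ (n + 1) = 0 := by
  have hpow := (sum_pow_card_of_sq_eq_zero
    (fun i : Fin n => isArnoldFamily_VGgen.sq_eq_zero i.castSucc (Fin.last n)) Finset.univ).2
  rwa [Finset.card_fin, ← zVG_eq_sum_VGgen] at hpow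

lemma zVG_pow_ne_zero (n : ℕ) : zVG n ^ n ≠ 0 := by
  set I := Ideal.span (Set.range fun i : Fin (n + 1) => (MvPolynomial.X i : MvPolynomial _ ℚ) ^ 2)
  set y : Fin (n + 1) → MvPolynomial (Fin (n + 1)) ℚ ⧸ I :=
    fun i => Ideal.Quotient.mk I (MvPolynomial.X i)
  have hy (i : Fin (n + 1)) : y i ^ 2 = 0 :=
    Ideal.Quotient.eq_zero_iff_mem.mpr (Ideal.subset_span ⟨i, rfl⟩)
  have hprod : ∏ i, y i ≠ 0 := by
    rw [← map_prod, Ne, Ideal.Quotient.eq_zero_iff_mem]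
    exact prod_X_notMem_span_X_sq
  have hmap : VGlift (isArnoldFamily_of_sq_eq_zero hy) (zVG n) = ∑ i : Fin n, y i.castSucc := by
    simp only [zVG_eq_sum_VGgen, map_sum, VGlift_VGgen, Fin.castSucc_lt_last, if_true]
  intro hz
  have hpow := (sum_pow_card_of_sq_eq_zero (fun i : Fin n => hy i.castSucc) Finset.univ).1
  rw [Finset.card_fin, ← hmap, ← map_pow, hz, map_zero, ← nsmul_eq_mul, eq_comm] at hpow
  have := IsAddTorsionFree.of_module_rat (M := MvPolynomial (Fin (n + 1)) ℚ ⧸ I)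
  rw [Fin.prod_univ_castSucc, (nsmul_eq_zero_iff_right n.factorial_ne_zero).mp hpow,
    zero_mul] at hprod
  exact hprod rfl

end VG

/-- For every integer `n ≥ 2`, the invariant subalgebra `VG_n^{S_n}` is
isomorphic as a `ℚ`-algebra to `ℚ[T]/⟨T^{n+1}⟩`. -/
theorem VGinv_iso_truncated_polynomial (n : ℕ) (hn : 2 ≤ n) :
    Nonempty ((VGinv n) ≃ₐ[ℚ] (Polynomial ℚ ⧸ Ideal.span {(Polynomial.X : Polynomial ℚ) ^ (n+1)})) := by
  let z : VGinv n := ⟨zVG n, zVG_mem_VGinv n⟩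
  have hz : z ^ n ≠ 0 := fun h => zVG_pow_ne_zero n (congrArg Subtype.val h)
  have hz' : z ^ (n + 1) = 0 := Subtype.ext (zVG_pow_succ_eq_zero n)
  exact nonempty_algEquiv_quotient_span_X_pow hz hz' (rank_VGinv_le n)

end
end

section
/- For every integer n ≥ 2, the ℚ-vector space OS_n^{S_{n+1}} of S_{n+1}-invariant elements of OS_n has dimension 2. -/
noncomputable section

/-- Unordered pairs of distinct elements of `{1, …, n+1}` (as `Fin (n+1)`). -/
abbrev OSidx (n : ℕ) := {s : Sym2 (Fin (n+1)) // ¬ s.IsDiag}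

/-- The exterior algebra over `ℚ` on generators indexed by unordered pairs of distinct
elements of `{1, …, n+1}`. -/
abbrev OSamb (n : ℕ) := ExteriorAlgebra ℚ (OSidx n →₀ ℚ)

/-- The generator `e_{ij} = e_{ji}` of the ambient exterior algebra. -/
def eAmb (n : ℕ) (i j : Fin (n+1)) (h : i ≠ j) : OSamb n :=
  ExteriorAlgebra.ι ℚ (Finsupp.single ⟨s(i,j), by simp [Sym2.mk_isDiag_iff, h]⟩ 1)

/-- The Orlik–Solomon relations for the braid arrangement. -/
inductive OSRel (n : ℕ) : OSamb n → OSamb n → Prop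
  | rel (i j k : Fin (n+1)) (hij : i ≠ j) (hjk : j ≠ k) (hik : i ≠ k) :
      OSRel n (eAmb n i k hik * eAmb n j k hjk - eAmb n i j hij * eAmb n j k hjk
        + eAmb n i j hij * eAmb n i k hik) 0

/-- The Orlik–Solomon algebra `OS_n` of the braid arrangement `A_n`. -/
abbrev OS (n : ℕ) := RingQuot (OSRel n)

/-- The generator `e_{ij}` of `OS_n`, defined to be `0` when `i = j`. -/
def eOS (n : ℕ) (i j : Fin (n+1)) : OS n :=
  if h : i = j then 0 else RingQuot.mkAlgHom ℚ (OSRel n) (eAmb n i j h)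

/-- `a = Σ_{1 ≤ i < j ≤ n} e_{ij}`. -/
def aOS (n : ℕ) : OS n :=
  ∑ p ∈ Finset.univ.filter (fun p : Fin n × Fin n => p.1 < p.2),
    eOS n p.1.castSucc p.2.castSucc

/-- `m = Σ_{1 ≤ i ≤ n} e_{i,n+1}`. -/
def mOS (n : ℕ) : OS n := ∑ i : Fin n, eOS n i.castSucc (Fin.last n)

/-- `c = Σ_{1 ≤ i < j ≤ n} (e_{ij} e_{i,n+1} + e_{ij} e_{j,n+1})`. -/
def cOS (n : ℕ) : OS n :=
  ∑ p ∈ Finset.univ.filter (fun p : Fin n × Fin n => p.1 < p.2),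
    (eOS n p.1.castSucc p.2.castSucc * eOS n p.1.castSucc (Fin.last n)
      + eOS n p.1.castSucc p.2.castSucc * eOS n p.2.castSucc (Fin.last n))

/-- `g = a·m − p·c` with `p = ⌊(n+1)/2⌋`. -/
def gOS (n : ℕ) : OS n := aOS n * mOS n - ((n+1)/2 : ℕ) • cOS n

/-- The action of a permutation on the index set of unordered pairs. -/
def OSpermIdx (n : ℕ) (σ : Equiv.Perm (Fin (n+1))) : OSidx n → OSidx n :=
  fun s => ⟨Sym2.map σ s.1, by
    obtain ⟨⟨x, y⟩, hs⟩ := s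
    intro hd
    rw [Sym2.map_pair_eq, Sym2.mk_isDiag_iff] at hd
    exact hs (Sym2.mk_isDiag_iff.mpr (σ.injective hd))⟩

/-- The algebra endomorphism of the ambient exterior algebra induced by a permutation. -/
def OSpermAmb (n : ℕ) (σ : Equiv.Perm (Fin (n+1))) : OSamb n →ₐ[ℚ] OSamb n :=
  ExteriorAlgebra.lift ℚ
    ⟨(ExteriorAlgebra.ι ℚ).comp (Finsupp.lmapDomain ℚ ℚ (OSpermIdx n σ)),
      fun m => by simp [ExteriorAlgebra.ι_sq_zero]⟩

lemma OSpermAmb_e (n : ℕ) (σ : Equiv.Perm (Fin (n+1))) (i j : Fin (n+1)) (h : i ≠ j) :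
    OSpermAmb n σ (eAmb n i j h) = eAmb n (σ i) (σ j) (fun hh => h (σ.injective hh)) := by
  simp only [OSpermAmb, eAmb, ExteriorAlgebra.lift_ι_apply, LinearMap.comp_apply,
    Finsupp.lmapDomain_apply, Finsupp.mapDomain_single]
  congr 1

/-- The algebra endomorphism of `OS_n` induced by a permutation of `{1, …, n+1}`. -/
def OSperm (n : ℕ) (σ : Equiv.Perm (Fin (n+1))) : OS n →ₐ[ℚ] OS n :=
  RingQuot.liftAlgHom ℚ
    ⟨(RingQuot.mkAlgHom ℚ (OSRel n)).comp (OSpermAmb n σ), by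
      intro x y h
      cases h with
      | rel i j k hij hjk hik =>
        simp only [AlgHom.comp_apply, map_sub, map_add, map_mul, map_zero, OSpermAmb_e]
        have := RingQuot.mkAlgHom_rel ℚ (OSRel.rel (σ i) (σ j) (σ k)
          (fun hh => hij (σ.injective hh)) (fun hh => hjk (σ.injective hh))
          (fun hh => hik (σ.injective hh)))
        simpa [map_sub, map_add, map_mul] using this⟩

/-- The subalgebra of `S_n`-invariants of `OS_n`, where `S_n` is the subgroup of permutations
of `{1, …, n+1}` fixing `n+1`. -/
def OSinv (n : ℕ) : Subalgebra ℚ (OS n) where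
  carrier := {x | ∀ σ : Equiv.Perm (Fin (n+1)), σ (Fin.last n) = Fin.last n → OSperm n σ x = x}
  mul_mem' := fun hx hy σ hσ => by rw [map_mul, hx σ hσ, hy σ hσ]
  add_mem' := fun hx hy σ hσ => by rw [map_add, hx σ hσ, hy σ hσ]
  one_mem' := fun σ _ => map_one _
  zero_mem' := fun σ _ => map_zero _
  algebraMap_mem' := fun r σ hσ => AlgHom.commutes _ r

/-- The subalgebra of `S_{n+1}`-invariants of `OS_n`. -/
def OSinvFull (n : ℕ) : Subalgebra ℚ (OS n) where
  carrier := {x | ∀ σ : Equiv.Perm (Fin (n+1)), OSperm n σ x = x}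
  mul_mem' := fun hx hy σ => by rw [map_mul, hx σ, hy σ]
  add_mem' := fun hx hy σ => by rw [map_add, hx σ, hy σ]
  one_mem' := fun σ => map_one _
  zero_mem' := fun σ => map_zero _
  algebraMap_mem' := fun r σ => AlgHom.commutes _ r

/-- The degree-`d` graded piece of `OS_n`: the image in `OS_n` of the degree-`d` component of
the exterior algebra. -/
def OSdeg (n : ℕ) (d : ℕ) : Submodule ℚ (OS n) :=
  Submodule.map (RingQuot.mkAlgHom ℚ (OSRel n)).toLinearMap
    ((LinearMap.range (ExteriorAlgebra.ι ℚ : (OSidx n →₀ ℚ) →ₗ[ℚ] OSamb n)) ^ d)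

/-- The degree-`d` graded piece of the invariant subalgebra `OS_n^{S_n}`. -/
def OSinvDeg (n : ℕ) (d : ℕ) : Submodule ℚ (OS n) :=
  Subalgebra.toSubmodule (OSinv n) ⊓ OSdeg n d

/-!
Averaging identifies the invariants with the coinvariants. The algebra is spanned by the monomials
`e_{ab} e_{bc} ⋯` of linear forests, since `e_{uv}` times the monomial of a path through `v` is a
signed sum over the ways to insert `u` into the path. The symmetric group permutes linear forests
with the same ordered block lengths transitively, so in the coinvariants the class of a monomial
depends only on these lengths.

If a block has at least three vertices, its class `p` vanishes: attaching two leaves `w` and `u`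
to a path at its end `c` by `e_{uw} e_{wc}` gives `-p` directly, whereas inserting them one after
the other gives `k • p` with `k ≥ 0`. If two blocks are single edges, exchanging them changes the
sign, so the class vanishes as well. This leaves `1` and the common class of the `e_{ij}`, which
the homomorphism to the dual numbers sending every `e_{ij}` to `ε` shows to be linearly
independent.
-/

section Representation

open Representation

variable {k G V : Type*} [CommRing k] [Group G] [Fintype G] [Invertible (Fintype.card G : k)]
  [AddCommGroup V] [Module k V] (ρ : Representation k G V)

lemma averageMap_apply_self (g : G) (x : V) : averageMap ρ (ρ g x) = averageMap ρ x := by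
  rw [averageMap, ← asAlgebraHom_single_one, ← Module.End.mul_apply, ← map_mul,
    GroupAlgebra.mul_average_right]

lemma coinvariants_mk_averageMap (x : V) :
    Coinvariants.mk ρ (averageMap ρ x) = Coinvariants.mk ρ x := by
  simp [GroupAlgebra.average, map_sum, Finset.card_univ, ← Nat.cast_smul_eq_nsmul k, smul_smul]

/-- For a finite group whose order is invertible, the invariants of a representation map
isomorphically onto its coinvariants, the inverse being induced by averaging. -/
def invariantsEquivCoinvariants : ρ.invariants ≃ₗ[k] ρ.Coinvariants :=
  LinearEquiv.ofLinearMap (Coinvariants.mk ρ ∘ₗ ρ.invariants.subtype)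
    (Coinvariants.lift ρ ((averageMap ρ).codRestrict ρ.invariants ρ.averageMap_invariant)
      fun g ↦ LinearMap.ext fun x ↦ Subtype.ext (averageMap_apply_self ρ g x))
    (Coinvariants.hom_ext <| LinearMap.ext fun x ↦ coinvariants_mk_averageMap ρ x)
    (LinearMap.ext fun x ↦ Subtype.ext <| averageMap_id ρ x x.2)

end Representation

lemma exists_perm_map_eq {α : Type*} {l l' : List α} (hl : l.Nodup) (hl' : l'.Nodup)
    (h : l.length = l'.length) : ∃ σ : Equiv.Perm α, l.map σ = l' := by
  have := Equiv.Perm.isMultiplyPretransitive α l.length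
  obtain ⟨σ, hσ⟩ := MulAction.exists_smul_eq (Equiv.Perm α)
    (⟨l.get, List.nodup_iff_injective_get.1 hl⟩ : Fin l.length ↪ α)
    ⟨l'.get ∘ Fin.cast h, (List.nodup_iff_injective_get.1 hl').comp (Fin.cast_injective h)⟩
  refine ⟨σ, List.ext_getElem (by simpa using h) fun i hi _ ↦ ?_⟩
  simpa using DFunLike.congr_fun hσ ⟨i, by simpa using hi⟩

lemma exists_perm_map_map_eq {α : Type*} {L L' : List (List α)} (hL : L.flatten.Nodup)
    (hL' : L'.flatten.Nodup) (h : L.map List.length = L'.map List.length) :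
    ∃ σ : Equiv.Perm α, L.map (List.map σ) = L' := by
  obtain ⟨σ, hσ⟩ := exists_perm_map_eq hL hL' (by rw [List.length_flatten, List.length_flatten, h])
  refine ⟨σ, List.eq_iff_flatten_eq.2 ⟨by rw [← List.map_flatten, hσ], ?_⟩⟩
  simpa [Function.comp_def] using h

namespace OS

variable {n : ℕ}

lemma eOS_self (i : Fin (n + 1)) : eOS n i i = 0 := by simp [eOS]

lemma eOS_of_ne {i j : Fin (n + 1)} (h : i ≠ j) :
    eOS n i j = RingQuot.mkAlgHom ℚ (OSRel n) (eAmb n i j h) :=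
  dif_neg h

lemma eOS_comm (i j : Fin (n + 1)) : eOS n i j = eOS n j i := by
  rcases eq_or_ne i j with rfl | h
  · rfl
  · rw [eOS_of_ne h, eOS_of_ne h.symm, eAmb, eAmb]
    simp only [Sym2.eq_swap]

lemma exists_eOS_eq_ι (i j : Fin (n + 1)) :
    ∃ v, eOS n i j = RingQuot.mkAlgHom ℚ (OSRel n) (ExteriorAlgebra.ι ℚ v) := by
  rcases eq_or_ne i j with rfl | h
  · exact ⟨0, by simp [eOS_self]⟩
  · exact ⟨_, eOS_of_ne h⟩

lemma eOS_mul_eOS_comm (i j k l : Fin (n + 1)) :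
    eOS n i j * eOS n k l = -(eOS n k l * eOS n i j) := by
  obtain ⟨v, hv⟩ := exists_eOS_eq_ι i j
  obtain ⟨w, hw⟩ := exists_eOS_eq_ι k l
  rw [hv, hw, eq_neg_iff_add_eq_zero, ← map_mul (RingQuot.mkAlgHom ℚ (OSRel n)),
    ← map_mul (RingQuot.mkAlgHom ℚ (OSRel n)), ← map_add, ExteriorAlgebra.ι_add_mul_swap, map_zero]

lemma eOS_mul_self (i j : Fin (n + 1)) : eOS n i j * eOS n i j = 0 := by
  obtain ⟨v, hv⟩ := exists_eOS_eq_ι i j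
  rw [hv, ← map_mul, ExteriorAlgebra.ι_sq_zero, map_zero]

lemma eOS_mul_eOS_eq_sub_mul (i j k : Fin (n + 1)) :
    eOS n i k * eOS n i j = (eOS n i k - eOS n i j) * eOS n j k := by
  rcases eq_or_ne i j with rfl | hij
  · simp [eOS_self, eOS_mul_self]
  rcases eq_or_ne j k with rfl | hjk
  · simp [eOS_self, eOS_mul_self]
  rcases eq_or_ne i k with rfl | hik
  · simp [eOS_self, eOS_comm j i, eOS_mul_self]
  have rel := RingQuot.mkAlgHom_rel ℚ (OSRel.rel i j k hij hjk hik)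
  simp only [map_add, map_sub, map_mul, map_zero, ← eOS_of_ne] at rel
  rw [eOS_mul_eOS_comm i k i j, sub_mul, eq_comm, ← add_eq_zero_iff_eq_neg, rel]

theorem eq_top_of_one_mem_of_eOS_mul_mem {N : Submodule ℚ (OS n)} (one_mem : 1 ∈ N)
    (eOS_mul_mem : ∀ i j, i ≠ j → ∀ x ∈ N, eOS n i j * x ∈ N) : N = ⊤ := by
  refine (Submodule.eq_top_iff'.2 <|
    (RingQuot.mkAlgHom_surjective ℚ (OSRel n)).forall.2 fun x ↦ ?_)
  induction x using CliffordAlgebra.left_induction with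
  | algebraMap r =>
    rw [AlgHom.commutes, Algebra.algebraMap_eq_smul_one]
    exact N.smul_mem r one_mem
  | add x y hx hy => rw [map_add]; exact N.add_mem hx hy
  | ι_mul x v hx =>
    change RingQuot.mkAlgHom ℚ (OSRel n) (ExteriorAlgebra.ι ℚ v * x) ∈ N
    rw [map_mul]
    induction v using Finsupp.induction_linear with
    | zero => simp
    | add v w hv hw => rw [map_add, map_add, add_mul]; exact N.add_mem hv hw
    | single s r =>
      obtain ⟨⟨i, j⟩, hs⟩ := s
      have hij : i ≠ j := by simpa using hs
      rw [← Finsupp.smul_single_one, map_smul, map_smul, smul_mul_assoc]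
      have hmem := N.smul_mem r (eOS_mul_mem i j hij _ hx)
      rwa [eOS_of_ne hij] at hmem

lemma algHom_ext {A : Type*} [Semiring A] [Algebra ℚ A] {f g : OS n →ₐ[ℚ] A}
    (h : ∀ i j, i ≠ j → f (eOS n i j) = g (eOS n i j)) : f = g := by
  have heq : LinearMap.eqLocus f.toLinearMap g.toLinearMap = ⊤ :=
    eq_top_of_one_mem_of_eOS_mul_mem (by simp) fun i j hij x hx ↦ by
      simp only [LinearMap.mem_eqLocus, AlgHom.toLinearMap_apply] at hx ⊢
      rw [map_mul, map_mul, h i j hij, hx]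
  exact AlgHom.ext fun x ↦ heq.ge (Submodule.mem_top (x := x))

lemma OSperm_eOS (σ : Equiv.Perm (Fin (n + 1))) (i j : Fin (n + 1)) :
    OSperm n σ (eOS n i j) = eOS n (σ i) (σ j) := by
  rcases eq_or_ne i j with rfl | h
  · simp [eOS_self]
  · rw [eOS_of_ne h, eOS_of_ne (σ.injective.ne h), OSperm, RingQuot.liftAlgHom_mkAlgHom_apply,
      AlgHom.comp_apply, OSpermAmb_e]

/-- The action of the symmetric group on `OS n`, as a linear representation. -/
def permRep (n : ℕ) : Representation ℚ (Equiv.Perm (Fin (n + 1))) (OS n) where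
  toFun σ := (OSperm n σ).toLinearMap
  map_one' := congrArg AlgHom.toLinearMap <|
    algHom_ext (g := AlgHom.id ℚ (OS n)) fun i j _ ↦ by simp [OSperm_eOS]
  map_mul' σ τ := congrArg AlgHom.toLinearMap <|
    algHom_ext (g := (OSperm n σ).comp (OSperm n τ)) fun i j _ ↦ by simp [OSperm_eOS]

@[simp]
lemma permRep_apply (σ : Equiv.Perm (Fin (n + 1))) (x : OS n) :
    permRep n σ x = OSperm n σ x := rfl

/-- The product `e_{ab} e_{bc} ⋯` along the edges of the path through the vertices of a list; it is
`1` for lists with at most one vertex. -/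
def pathMonomial : List (Fin (n + 1)) → OS n
  | a :: b :: t => eOS n a b * pathMonomial (b :: t)
  | _ => 1

@[simp]
lemma pathMonomial_nil : pathMonomial ([] : List (Fin (n + 1))) = 1 := rfl

@[simp]
lemma pathMonomial_singleton (a : Fin (n + 1)) : pathMonomial [a] = 1 := rfl

lemma pathMonomial_cons_cons (a b : Fin (n + 1)) (t : List (Fin (n + 1))) :
    pathMonomial (a :: b :: t) = eOS n a b * pathMonomial (b :: t) := rfl

lemma pathMonomial_append_cons (s t : List (Fin (n + 1))) (c : Fin (n + 1)) :
    pathMonomial (s ++ c :: t) = pathMonomial (s ++ [c]) * pathMonomial (c :: t) := by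
  induction s with
  | nil => simp
  | cons a s ih =>
    cases s with
    | nil => simp [pathMonomial_cons_cons]
    | cons b s =>
      simp only [List.cons_append, pathMonomial_cons_cons, mul_assoc] at ih ⊢
      rw [ih]

lemma OSperm_pathMonomial (σ : Equiv.Perm (Fin (n + 1))) (l : List (Fin (n + 1))) :
    OSperm n σ (pathMonomial l) = pathMonomial (l.map σ) := by
  induction l with
  | nil => simp
  | cons a l ih =>
    cases l with
    | nil => simp
    | cons b l => rw [pathMonomial_cons_cons, map_mul, OSperm_eOS, ih]; rfl

lemma eOS_mul_pathMonomial_comm (i j : Fin (n + 1)) (l : List (Fin (n + 1))) :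
    eOS n i j * pathMonomial l = (-1 : ℚ) ^ (l.length - 1) • (pathMonomial l * eOS n i j) := by
  induction l with
  | nil => simp
  | cons a l ih =>
    cases l with
    | nil => simp
    | cons b l =>
      rw [pathMonomial_cons_cons, ← mul_assoc, eOS_mul_eOS_comm, neg_mul, mul_assoc, ih]
      simp [pow_succ, mul_assoc]

lemma commute_eOS_mul_eOS_pathMonomial (i j k m : Fin (n + 1)) (l : List (Fin (n + 1))) :
    Commute (eOS n i j * eOS n k m) (pathMonomial l) := by
  rw [commute_iff_eq, mul_assoc, eOS_mul_pathMonomial_comm, mul_smul_comm, ← mul_assoc,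
    eOS_mul_pathMonomial_comm, smul_mul_assoc, smul_smul, ← mul_pow, mul_assoc]
  simp

lemma exists_pathMonomial_mul_comm (l l' : List (Fin (n + 1))) :
    ∃ c : ℚ, pathMonomial l * pathMonomial l' = c • (pathMonomial l' * pathMonomial l) := by
  induction l with
  | nil => exact ⟨1, by simp⟩
  | cons a l ih =>
    cases l with
    | nil => exact ⟨1, by simp⟩
    | cons b l =>
      obtain ⟨c, hc⟩ := ih
      refine ⟨c * (-1) ^ (l'.length - 1), ?_⟩
      rw [pathMonomial_cons_cons, mul_assoc, hc, mul_smul_comm, ← mul_assoc,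
        eOS_mul_pathMonomial_comm, smul_mul_assoc, mul_assoc, smul_smul]

lemma eOS_mul_pathMonomial_eq_zero {i j : Fin (n + 1)} {l : List (Fin (n + 1))} (hi : i ∈ l)
    (hj : j ∈ l) : eOS n i j * pathMonomial l = 0 := by
  induction l generalizing i j with
  | nil => simp at hi
  | cons a l ih =>
    cases l with
    | nil => simp_all [eOS_self]
    | cons b l =>
      have first {k : Fin (n + 1)} (hk : k ∈ b :: l) :
          eOS n a k * pathMonomial (a :: b :: l) = 0 := by
        rw [pathMonomial_cons_cons, ← mul_assoc, eOS_mul_eOS_eq_sub_mul, mul_assoc,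
          ih (by simp) hk, mul_zero]
      rcases List.mem_cons.1 hi with rfl | hi' <;> rcases List.mem_cons.1 hj with rfl | hj'
      · simp [eOS_self]
      · exact first hj'
      · rw [eOS_comm, first hi']
      · rw [pathMonomial_cons_cons, ← mul_assoc, eOS_mul_eOS_comm, neg_mul, mul_assoc, ih hi' hj',
          mul_zero, neg_zero]

lemma eOS_mul_pathMonomial_cons_cons (a b w : Fin (n + 1)) (t : List (Fin (n + 1))) :
    eOS n a b * pathMonomial (w :: b :: t) =
      pathMonomial (a :: w :: b :: t) - pathMonomial (w :: a :: b :: t) := by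
  have rel : eOS n a b * eOS n w b = eOS n a w * eOS n w b - eOS n w a * eOS n a b := by
    rw [eOS_comm w a, eOS_mul_eOS_comm a w a b, eOS_mul_eOS_eq_sub_mul a w b]
    noncomm_ring
  simp only [pathMonomial_cons_cons, ← mul_assoc, rel, sub_mul]

lemma eOS_getElem_mul_pathMonomial (w : Fin (n + 1)) (l : List (Fin (n + 1))) (j : ℕ)
    (hj : j < l.length) :
    eOS n w l[j] * pathMonomial l =
      ∑ i ∈ Finset.range (j + 1), (-1 : ℚ) ^ i • pathMonomial (l.insertIdx i w) := by
  induction l generalizing j with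
  | nil => simp at hj
  | cons a l ih =>
    cases j with
    | zero => cases l <;> simp [pathMonomial_cons_cons]
    | succ j =>
      cases l with
      | nil => simp at hj
      | cons b t =>
        have hj' : j < (b :: t).length := by simpa using hj
        calc eOS n w (b :: t)[j] * (eOS n a b * pathMonomial (b :: t))
          _ = -(eOS n a b * (eOS n w (b :: t)[j] * pathMonomial (b :: t))) := by
            rw [← mul_assoc, eOS_mul_eOS_comm, neg_mul, mul_assoc]
          _ = -(eOS n a b * (∑ i ∈ Finset.range j,
                (-1 : ℚ) ^ (i + 1) • pathMonomial (b :: t.insertIdx i w) +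
              pathMonomial (w :: b :: t))) := by
            rw [ih j hj', Finset.sum_range_succ']
            simp
          _ = ∑ i ∈ Finset.range j, (-1 : ℚ) ^ (i + 2) • pathMonomial (a :: b :: t.insertIdx i w) -
              pathMonomial (a :: w :: b :: t) + pathMonomial (w :: a :: b :: t) := by
            rw [mul_add, eOS_mul_pathMonomial_cons_cons, Finset.mul_sum, neg_add, neg_sub,
              ← Finset.sum_neg_distrib]
            simp [pathMonomial_cons_cons, pow_succ, ← add_sub_assoc, sub_add_eq_add_sub]
          _ = _ := by
            rw [Finset.sum_range_succ', Finset.sum_range_succ']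
            simp [← sub_eq_add_neg]

lemma eOS_mul_mem_span_pathMonomial {w v : Fin (n + 1)} {l : List (Fin (n + 1))} (hv : v ∈ l)
    {x : OS n} (hx : x ∈ Submodule.span ℚ (pathMonomial '' {z | z.Perm l})) :
    eOS n w v * x ∈ Submodule.span ℚ (pathMonomial '' {z | z.Perm (w :: l)}) := by
  refine (Submodule.map_span_le (LinearMap.mulLeft ℚ (eOS n w v)) _ _).2 ?_
    (Submodule.mem_map_of_mem hx)
  rintro _ ⟨z, hz, rfl⟩
  obtain ⟨j, hj, rfl⟩ := List.getElem_of_mem (hz.mem_iff.2 hv)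
  rw [LinearMap.mulLeft_apply, eOS_getElem_mul_pathMonomial]
  refine Submodule.sum_mem _ fun i hi ↦ Submodule.smul_mem _ _ <|
    Submodule.subset_span ⟨_, ?_, rfl⟩
  exact (List.perm_insertIdx w z (by grind)).trans (hz.cons w)

lemma eOS_mul_pathMonomial_mul_pathMonomial_mem_span {i j : Fin (n + 1)}
    {l m : List (Fin (n + 1))} (hi : i ∈ l) (hj : j ∈ m) :
    eOS n i j * (pathMonomial l * pathMonomial m) ∈
      Submodule.span ℚ (pathMonomial '' {z | z.Perm (l ++ m)}) := by
  induction l generalizing i j with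
  | nil => simp at hi
  | cons a l ih =>
    cases l with
    | nil =>
      rw [List.mem_singleton.1 hi, pathMonomial_singleton, one_mul]
      exact eOS_mul_mem_span_pathMonomial hj (Submodule.subset_span ⟨m, .refl m, rfl⟩)
    | cons b l =>
      rw [pathMonomial_cons_cons, mul_assoc, ← mul_assoc]
      rcases List.mem_cons.1 hi with rfl | hi
      · have hb := ih (i := b) (by simp) hj
        rw [eOS_mul_eOS_eq_sub_mul, mul_assoc, sub_mul]
        exact sub_mem (eOS_mul_mem_span_pathMonomial (by simp [hj]) hb)
          (eOS_mul_mem_span_pathMonomial (by simp) hb)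
      · rw [eOS_mul_eOS_comm, neg_mul, mul_assoc]
        exact neg_mem (eOS_mul_mem_span_pathMonomial (by simp) (ih hi hj))

/-- The product of the path monomials of a list of paths. -/
def forestMonomial (L : List (List (Fin (n + 1)))) : OS n := (L.map pathMonomial).prod

@[simp]
lemma forestMonomial_nil : forestMonomial ([] : List (List (Fin (n + 1)))) = 1 := rfl

@[simp]
lemma forestMonomial_cons (l : List (Fin (n + 1))) (L : List (List (Fin (n + 1)))) :
    forestMonomial (l :: L) = pathMonomial l * forestMonomial L := by simp [forestMonomial]

lemma OSperm_forestMonomial (σ : Equiv.Perm (Fin (n + 1))) (L : List (List (Fin (n + 1)))) :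
    OSperm n σ (forestMonomial L) = forestMonomial (L.map (List.map σ)) := by
  simp [forestMonomial, map_list_prod, OSperm_pathMonomial, Function.comp_def]

lemma exists_forestMonomial_eq_smul_of_perm {L L' : List (List (Fin (n + 1)))} (h : L.Perm L') :
    ∃ c : ℚ, forestMonomial L = c • forestMonomial L' := by
  induction h with
  | nil => exact ⟨1, by simp⟩
  | cons l _ ih =>
    obtain ⟨c, hc⟩ := ih
    exact ⟨c, by simp [hc]⟩
  | swap l l' L =>
    obtain ⟨c, hc⟩ := exists_pathMonomial_mul_comm l' l
    exact ⟨c, by simp [← mul_assoc, hc]⟩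
  | trans _ _ ih ih' =>
    obtain ⟨c, hc⟩ := ih
    obtain ⟨c', hc'⟩ := ih'
    exact ⟨c * c', by rw [hc, hc', smul_smul]⟩

lemma exists_mem_flatten_forestMonomial_eq (v : Fin (n + 1)) {L : List (List (Fin (n + 1)))}
    (hL : L.flatten.Nodup) :
    ∃ L', L'.flatten.Nodup ∧ v ∈ L'.flatten ∧ L.flatten ⊆ L'.flatten ∧
      forestMonomial L' = forestMonomial L := by
  by_cases hv : v ∈ L.flatten
  · exact ⟨L, hL, hv, fun _ ↦ id, rfl⟩
  · exact ⟨[v] :: L, by simpa using ⟨by simpa using hv, hL⟩, by simp, by simp, by simp⟩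

lemma eOS_mul_forestMonomial_mem_span {i j : Fin (n + 1)} {L : List (List (Fin (n + 1)))}
    (hL : L.flatten.Nodup) (hi : i ∈ L.flatten) (hj : j ∈ L.flatten) :
    eOS n i j * forestMonomial L ∈
      Submodule.span ℚ (forestMonomial '' {L | L.flatten.Nodup}) := by
  obtain ⟨l, hlL, hil⟩ := List.mem_flatten.1 hi
  obtain ⟨L₁, hL₁⟩ : ∃ L₁, L.Perm (l :: L₁) := ⟨_, List.perm_cons_erase hlL⟩
  by_cases hjl : j ∈ l
  · obtain ⟨c, hc⟩ := exists_forestMonomial_eq_smul_of_perm hL₁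
    rw [hc, forestMonomial_cons, mul_smul_comm, ← mul_assoc,
      eOS_mul_pathMonomial_eq_zero hil hjl, zero_mul, smul_zero]
    exact zero_mem _
  obtain ⟨m, hmL, hjm⟩ : ∃ m ∈ L₁, j ∈ m := by
    simpa [hL₁.flatten.mem_iff, hjl] using hj
  obtain ⟨L₂, hL₂⟩ : ∃ L₂, L.Perm (l :: m :: L₂) :=
    ⟨_, hL₁.trans ((List.perm_cons_erase hmL).cons l)⟩
  obtain ⟨c, hc⟩ := exists_forestMonomial_eq_smul_of_perm hL₂
  rw [hc, mul_smul_comm, forestMonomial_cons, forestMonomial_cons, ← mul_assoc (pathMonomial l),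
    ← mul_assoc]
  refine Submodule.smul_mem _ c ?_
  refine (Submodule.map_span_le (LinearMap.mulRight ℚ (forestMonomial L₂)) _ _).2 ?_
    (Submodule.mem_map_of_mem (eOS_mul_pathMonomial_mul_pathMonomial_mem_span hil hjm))
  rintro _ ⟨z, hz, rfl⟩
  refine Submodule.subset_span ⟨z :: L₂, ?_, forestMonomial_cons z L₂⟩
  have hperm : (z :: L₂).flatten.Perm L.flatten := by
    simpa [List.append_assoc] using (hz.append_right L₂.flatten).trans
      (by simpa using hL₂.flatten.symm)
  exact hperm.nodup_iff.2 hL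

theorem span_forestMonomial :
    Submodule.span ℚ (forestMonomial '' {L : List (List (Fin (n + 1))) | L.flatten.Nodup}) = ⊤ := by
  refine eq_top_of_one_mem_of_eOS_mul_mem (Submodule.subset_span ⟨[], by simp, rfl⟩)
    fun i j _ x hx ↦ ?_
  refine (Submodule.map_span_le (LinearMap.mulLeft ℚ (eOS n i j)) _ _).2 ?_
    (Submodule.mem_map_of_mem hx)
  rintro _ ⟨L, hL, rfl⟩
  obtain ⟨L₁, hL₁, hi, -, h₁⟩ := exists_mem_flatten_forestMonomial_eq i hL
  obtain ⟨L₂, hL₂, hj, hsub, h₂⟩ := exists_mem_flatten_forestMonomial_eq j hL₁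
  rw [LinearMap.mulLeft_apply, ← h₁, ← h₂]
  exact eOS_mul_forestMonomial_mem_span hL₂ (hsub hi) hj

section Exchangeable

variable {M : Type*} [AddCommGroup M] [Module ℚ M] {f : OS n →ₗ[ℚ] M} {p : M}

lemma map_eOS_getElem_mul_pathMonomial {w : Fin (n + 1)} {l : List (Fin (n + 1))}
    (hf : ∀ z, z.Perm (w :: l) → f (pathMonomial z) = p) {j : ℕ} (hj : j < l.length) :
    f (eOS n w l[j] * pathMonomial l) = if Even j then p else 0 := by
  have hterm (i) (hi : i ∈ Finset.range (j + 1)) :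
      f ((-1 : ℚ) ^ i • pathMonomial (l.insertIdx i w)) = (-1 : ℚ) ^ i • p := by
    rw [map_smul, hf _ (List.perm_insertIdx w l (by grind))]
  rw [eOS_getElem_mul_pathMonomial, map_sum, Finset.sum_congr rfl hterm, ← Finset.sum_smul,
    neg_one_geom_sum]
  simp [Nat.even_add_one, -Nat.not_even_iff_odd, ite_not, ite_smul]

lemma map_eOS_mul_eOS_getElem_mul_pathMonomial {u w : Fin (n + 1)} {l : List (Fin (n + 1))}
    (hf : ∀ z, z.Perm (u :: w :: l) → f (pathMonomial z) = p) {j : ℕ} (hj : j < l.length) :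
    f (eOS n u w * (eOS n w l[j] * pathMonomial l)) =
      ((Finset.range (j + 1)).filter Even).card • p := by
  have hterm (i) (hi : i ∈ Finset.range (j + 1)) :
      f (eOS n u w * (-1 : ℚ) ^ i • pathMonomial (l.insertIdx i w)) = if Even i then p else 0 := by
    have hil : i ≤ l.length := by grind
    have hfi (z) (hz : z.Perm (u :: l.insertIdx i w)) : f (pathMonomial z) = p :=
      hf z (hz.trans ((List.perm_insertIdx w l hil).cons u))
    have hi' : i < (l.insertIdx i w).length := by grind
    have hfu := map_eOS_getElem_mul_pathMonomial hfi hi'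
    rw [List.getElem_insertIdx_self] at hfu
    rw [mul_smul_comm, map_smul, hfu]
    split_ifs with h
    · rw [h.neg_one_pow, one_smul]
    · rw [smul_zero]
  rw [eOS_getElem_mul_pathMonomial, Finset.mul_sum, map_sum, Finset.sum_congr rfl hterm,
    ← Finset.sum_filter, Finset.sum_const]

lemma eOS_mul_eOS_mul_pathMonomial_append (u w c : Fin (n + 1)) (l : List (Fin (n + 1))) :
    eOS n u w * (eOS n w c * pathMonomial (l ++ [c])) = -pathMonomial (l ++ [c, w, u]) := by
  rw [← mul_assoc, (commute_eOS_mul_eOS_pathMonomial u w w c _).eq, eOS_mul_eOS_comm,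
    pathMonomial_append_cons l [w, u] c, eOS_comm w c, eOS_comm u w]
  simp [pathMonomial_cons_cons]

lemma eq_zero_of_map_pathMonomial_eq {l : List (Fin (n + 1))} (hl : 3 ≤ l.length)
    (hf : ∀ z, z.Perm l → f (pathMonomial z) = p) : p = 0 := by
  match l, hl with
  | u :: w :: c :: x, _ =>
    have hattach : -p = ((Finset.range (x.length + 1)).filter Even).card • p := by
      have hinsert := map_eOS_mul_eOS_getElem_mul_pathMonomial (u := u) (w := w) (l := x ++ [c])
        (fun z hz ↦ hf z (hz.trans (by grind))) (j := x.length) (by simp)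
      rwa [List.getElem_concat_length rfl, eOS_mul_eOS_mul_pathMonomial_append, map_neg,
        hf _ (by grind)] at hinsert
    rw [neg_eq_iff_add_eq_zero, ← succ_nsmul', ← Nat.cast_smul_eq_nsmul ℚ] at hattach
    exact (smul_eq_zero.1 hattach).resolve_left (Nat.cast_ne_zero.2 (Nat.succ_ne_zero _))

end Exchangeable

section Coinvariants

open Representation

lemma mk_forestMonomial_eq_of_map_length_eq {L L' : List (List (Fin (n + 1)))}
    (hL : L.flatten.Nodup) (hL' : L'.flatten.Nodup) (h : L.map List.length = L'.map List.length) :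
    Coinvariants.mk (permRep n) (forestMonomial L) =
      Coinvariants.mk (permRep n) (forestMonomial L') := by
  obtain ⟨σ, rfl⟩ := exists_perm_map_map_eq hL hL' h
  rw [← OSperm_forestMonomial, ← permRep_apply, Coinvariants.mk_self_apply]

lemma mk_forestMonomial_cons_eq_zero {l : List (Fin (n + 1))} {L : List (List (Fin (n + 1)))}
    (hL : (l :: L).flatten.Nodup) (hl : 3 ≤ l.length) :
    Coinvariants.mk (permRep n) (forestMonomial (l :: L)) = 0 := by
  refine eq_zero_of_map_pathMonomial_eq
    (f := Coinvariants.mk (permRep n) ∘ₗ LinearMap.mulRight ℚ (forestMonomial L)) hl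
    fun z hz ↦ ?_
  simpa using mk_forestMonomial_eq_of_map_length_eq (L := z :: L) (L' := l :: L)
    ((hz.append_right L.flatten).nodup_iff.2 hL) hL (by simp [hz.length_eq])

lemma mk_forestMonomial_eq_zero {l : List (Fin (n + 1))} {L : List (List (Fin (n + 1)))}
    (hL : L.flatten.Nodup) (hlL : l ∈ L) (hl : 3 ≤ l.length) :
    Coinvariants.mk (permRep n) (forestMonomial L) = 0 := by
  have hperm := List.perm_cons_erase hlL
  obtain ⟨c, hc⟩ := exists_forestMonomial_eq_smul_of_perm hperm
  rw [hc, map_smul, mk_forestMonomial_cons_eq_zero (hperm.flatten.nodup_iff.1 hL) hl, smul_zero]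

lemma mk_forestMonomial_pair_pair_eq_zero {a b c d : Fin (n + 1)} {L : List (List (Fin (n + 1)))}
    (hL : ([a, b] :: [c, d] :: L).flatten.Nodup) :
    Coinvariants.mk (permRep n) (forestMonomial ([a, b] :: [c, d] :: L)) = 0 := by
  have hneg : forestMonomial ([c, d] :: [a, b] :: L) =
      -forestMonomial ([a, b] :: [c, d] :: L) := by
    simp [pathMonomial_cons_cons, ← mul_assoc, eOS_mul_eOS_comm c d]
  have hswap : Coinvariants.mk (permRep n) (forestMonomial ([a, b] :: [c, d] :: L)) =
      Coinvariants.mk (permRep n) (forestMonomial ([c, d] :: [a, b] :: L)) :=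
    mk_forestMonomial_eq_of_map_length_eq hL
      ((List.Perm.swap _ _ L).flatten.nodup_iff.1 hL) rfl
  rw [hneg, map_neg] at hswap
  have := IsAddTorsionFree.of_module_rat (permRep n).Coinvariants
  exact self_eq_neg.1 hswap

lemma forestMonomial_filter_two_le_length (L : List (List (Fin (n + 1)))) :
    forestMonomial (L.filter (2 ≤ ·.length)) = forestMonomial L := by
  induction L with
  | nil => rfl
  | cons l L ih =>
    match l with
    | [] => simpa using ih
    | [a] => simpa using ih
    | a :: b :: l => simp [ih]

lemma mk_forestMonomial_eq_zero_or_eq_one_or_eq_eOS {L : List (List (Fin (n + 1)))}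
    (hL : L.flatten.Nodup) :
    Coinvariants.mk (permRep n) (forestMonomial L) = 0 ∨ forestMonomial L = 1 ∨
      ∃ a b, a ≠ b ∧ forestMonomial L = eOS n a b := by
  rw [← forestMonomial_filter_two_le_length]
  have hlong : ∀ l ∈ L.filter (2 ≤ ·.length), 2 ≤ l.length := by simp
  replace hL : (L.filter (2 ≤ ·.length)).flatten.Nodup := hL.sublist List.filter_sublist.flatten
  generalize L.filter (2 ≤ ·.length) = L at hL hlong ⊢
  by_cases hthree : ∃ l ∈ L, 3 ≤ l.length
  · obtain ⟨l, hl, hl3⟩ := hthree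
    exact .inl (mk_forestMonomial_eq_zero hL hl hl3)
  have htwo (l) (hl : l ∈ L) : ∃ a b, l = [a, b] :=
    List.length_eq_two.1 (by grind)
  match L with
  | [] => exact .inr (.inl rfl)
  | [l] =>
    obtain ⟨a, b, rfl⟩ := htwo l (by simp)
    exact .inr (.inr ⟨a, b, by simpa using hL, by simp [pathMonomial_cons_cons]⟩)
  | l :: m :: L =>
    obtain ⟨a, b, rfl⟩ := htwo l (by simp)
    obtain ⟨c, d, rfl⟩ := htwo m (by simp)
    exact .inl (mk_forestMonomial_pair_pair_eq_zero hL)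

lemma mk_eOS_eq_mk_eOS {a b c d : Fin (n + 1)} (hab : a ≠ b) (hcd : c ≠ d) :
    Coinvariants.mk (permRep n) (eOS n a b) = Coinvariants.mk (permRep n) (eOS n c d) := by
  simpa [pathMonomial_cons_cons] using mk_forestMonomial_eq_of_map_length_eq (L := [[a, b]])
    (L' := [[c, d]]) (by simpa using hab) (by simpa using hcd) rfl

open scoped DualNumber

/-- The algebra homomorphism from `OS n` to the dual numbers which sends every generator to `ε`. -/
def augmentation (n : ℕ) : OS n →ₐ[ℚ] ℚ[ε] :=
  RingQuot.liftAlgHom ℚ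
    ⟨ExteriorAlgebra.lift ℚ
      ⟨TrivSqZeroExt.inrHom ℚ ℚ ∘ₗ Finsupp.linearCombination ℚ fun _ ↦ 1, fun v ↦ by simp⟩,
      fun _ _ ⟨_, _, _, _, _, _⟩ ↦ by simp [eAmb]⟩

lemma augmentation_eOS {i j : Fin (n + 1)} (h : i ≠ j) : augmentation n (eOS n i j) = ε := by
  rw [eOS_of_ne h, augmentation, RingQuot.liftAlgHom_mkAlgHom_apply]
  simp [eAmb]

lemma augmentation_comp_OSperm (σ : Equiv.Perm (Fin (n + 1))) :
    (augmentation n).comp (OSperm n σ) = augmentation n :=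
  algHom_ext fun i j h ↦ by
    rw [AlgHom.comp_apply, OSperm_eOS, augmentation_eOS h, augmentation_eOS (σ.injective.ne h)]

/-- The linear map from the coinvariants to the dual numbers induced by `augmentation`. -/
def coinvariantsToDualNumber (n : ℕ) : (permRep n).Coinvariants →ₗ[ℚ] ℚ[ε] :=
  Coinvariants.lift (permRep n) (augmentation n).toLinearMap fun σ ↦
    congrArg AlgHom.toLinearMap (augmentation_comp_OSperm σ)

@[simp]
lemma coinvariantsToDualNumber_mk (x : OS n) :
    coinvariantsToDualNumber n (Coinvariants.mk (permRep n) x) = augmentation n x := rfl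

lemma mk_eq_fst_smul_add_snd_smul {a b : Fin (n + 1)} (hab : a ≠ b) (x : OS n) :
    Coinvariants.mk (permRep n) x =
      (augmentation n x).fst • Coinvariants.mk (permRep n) 1 +
        (augmentation n x).snd • Coinvariants.mk (permRep n) (eOS n a b) := by
  suffices Coinvariants.mk (permRep n) =
      ((TrivSqZeroExt.fstHom ℚ ℚ ℚ).toLinearMap.smulRight (Coinvariants.mk (permRep n) 1) +
        (TrivSqZeroExt.sndHom ℚ ℚ).smulRight (Coinvariants.mk (permRep n) (eOS n a b))) ∘ₗ
          (augmentation n).toLinearMap from LinearMap.congr_fun this x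
  refine LinearMap.ext_on span_forestMonomial ?_
  rintro _ ⟨L, hL, rfl⟩
  obtain h | h | ⟨c, d, hcd, h⟩ := mk_forestMonomial_eq_zero_or_eq_one_or_eq_eOS hL
  · have haug : augmentation n (forestMonomial L) = 0 := by
      rw [← coinvariantsToDualNumber_mk, h, map_zero]
    simp [h, haug]
  · simp [h]
  · simp [h, augmentation_eOS hcd, mk_eOS_eq_mk_eOS hcd hab]

theorem coinvariantsToDualNumber_bijective (hn : n ≠ 0) :
    Function.Bijective (coinvariantsToDualNumber n) := by
  obtain ⟨m, rfl⟩ := Nat.exists_eq_succ_of_ne_zero hn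
  have h01 : (0 : Fin (m + 2)) ≠ 1 := by simp
  refine ⟨(injective_iff_map_eq_zero _).2 fun y hy ↦ ?_, fun z ↦ ?_⟩
  · obtain ⟨x, rfl⟩ := Coinvariants.mk_surjective _ y
    rw [coinvariantsToDualNumber_mk] at hy
    rw [mk_eq_fst_smul_add_snd_smul h01, hy]
    simp
  · refine ⟨Coinvariants.mk _ (z.fst • 1 + z.snd • eOS _ 0 1), ?_⟩
    ext <;> simp [augmentation_eOS h01]

theorem finrank_coinvariants_permRep (hn : n ≠ 0) :
    Module.finrank ℚ (permRep n).Coinvariants = 2 :=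
  calc Module.finrank ℚ (permRep n).Coinvariants
    _ = Module.finrank ℚ (ℚ × ℚ) :=
      (LinearEquiv.ofBijective _ (coinvariantsToDualNumber_bijective hn)).finrank_eq
    _ = 2 := by simp

end Coinvariants

end OS

/-- For every integer `n ≥ 2`, the `ℚ`-vector space `OS_n^{S_{n+1}}` has
dimension `2`. -/
theorem finrank_OSinvFull (n : ℕ) (hn : 2 ≤ n) : Module.finrank ℚ (OSinvFull n) = 2 := by
  let : Invertible (Fintype.card (Equiv.Perm (Fin (n + 1))) : ℚ) :=
    invertibleOfNonzero (Nat.cast_ne_zero.2 Fintype.card_ne_zero)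
  calc Module.finrank ℚ (OSinvFull n)
    _ = Module.finrank ℚ (OS.permRep n).invariants := rfl
    _ = Module.finrank ℚ (OS.permRep n).Coinvariants :=
      (invariantsEquivCoinvariants (OS.permRep n)).finrank_eq
    _ = 2 := OS.finrank_coinvariants_permRep (by lia)

end
end
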